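/- arXiv:2403.14923 — 2 statements merged into one kernel-verified Lean document; each statement's English description precedes it below -/
import Mathlib

section
/- Let x and y be real numbers with x > 6 and 4 < y ≤ x·(2x)^x. Then log(y)/log(log(y)) < x. -/
/-!
Put `t = log y`; the claim is `t < x * log t`. As `t ↦ x * log t - t` is concave, it is enough to
check the two ends of the range of `t`. At `t = log 4` the bound `1 - s⁻¹ ≤ log s` suffices. At
`t = log b` with `b = x * (2 * x) ^ x` the claim amounts to `b ^ x⁻¹ < log b`, that is, to
`2 * x ^ x⁻¹ < log (2 * x) + log x / x`. Since `x ^ x⁻¹` decreases from `x = exp 1` on, it is at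
most `6 ^ 6⁻¹ < 1.35`, and `log x / x = log (x ^ x⁻¹)` is bounded below by the same inequality.
-/

open Real Set

section LtMulLog

variable {b c t : ℝ}

lemma convex_setOf_lt_mul_log (hc : 0 ≤ c) : Convex ℝ {t ∈ Ioi 0 | t < c * log t} := by
  have hconcave : ConcaveOn ℝ (Ioi 0) fun t ↦ c * log t - t :=
    (strictConcaveOn_log_Ioi.concaveOn.smul hc).sub (convexOn_id (convex_Ioi 0))
  simpa only [sub_pos] using hconcave.convex_gt 0

lemma lt_mul_log_of_add_sq_lt (hc : 0 ≤ c) (h : c + t ^ 2 < c * t) : t < c * log t := by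
  have ht : 0 < t := pos_of_mul_pos_right (lt_of_le_of_lt (by positivity) h) hc
  calc
    t < c * (1 - t⁻¹) := by
      have : t * t < c * (1 - t⁻¹) * t := by
        rw [mul_assoc, sub_mul, inv_mul_cancel₀ ht.ne']
        linarith
      exact lt_of_mul_lt_mul_right this ht.le
    _ ≤ c * log t := by gcongr; exact one_sub_inv_le_log_of_pos ht

lemma log_lt_mul_log_log_of_rpow_inv_lt_log (hb : 0 < b) (hc : 0 < c) (h : b ^ c⁻¹ < log b) :
    log b < c * log (log b) := by
  have hlog : c⁻¹ * log b < log (log b) := by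
    simpa only [log_rpow hb] using log_lt_log (rpow_pos_of_pos hb _) h
  rwa [inv_mul_lt_iff₀ hc] at hlog

end LtMulLog

lemma antitoneOn_rpow_inv_self : AntitoneOn (fun x : ℝ ↦ x ^ x⁻¹) (Ici (exp 1)) := by
  intro x hx z hz hxz
  have hx0 : 0 < x := (exp_pos 1).trans_le hx
  have hz0 : 0 < z := (exp_pos 1).trans_le hz
  simpa only [rpow_def_of_pos hx0, rpow_def_of_pos hz0, exp_le_exp, ← div_eq_mul_inv] using
    log_div_self_antitoneOn hx hz hxz

section SixLe

variable {x : ℝ}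

lemma rpow_inv_self_lt_of_six_le (hx : 6 ≤ x) : x ^ x⁻¹ < 1.35 := by
  have he : exp 1 ≤ 6 := by linarith [exp_one_lt_d9]
  calc
    x ^ x⁻¹ ≤ (6 : ℝ) ^ (6 : ℝ)⁻¹ := antitoneOn_rpow_inv_self he (he.trans hx) hx
    _ < 1.35 := by
      rw [rpow_inv_lt_iff_of_pos (by norm_num) (by norm_num) (by norm_num)]
      norm_num

lemma two_mul_rpow_inv_self_lt_log_add (hx : 6 ≤ x) : 2 * x ^ x⁻¹ < log (2 * x) + log x / x := by
  have hx0 : 0 < x := by linarith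
  have hroot_one : 1 ≤ x ^ x⁻¹ := one_le_rpow (by linarith) (by positivity)
  have hroot_lt : x ^ x⁻¹ < 1.35 := rpow_inv_self_lt_of_six_le hx
  have hlog_root : 1 - (x ^ x⁻¹)⁻¹ ≤ log x / x := by
    simpa only [log_rpow hx0, inv_mul_eq_div] using
      one_sub_inv_le_log_of_pos (rpow_pos_of_pos hx0 x⁻¹)
  have hlog : 2.45 < log (2 * x) := by
    have htwelve : log 12 = 2 * log 2 + log 3 := by
      rw [show (12 : ℝ) = 2 ^ 2 * 3 by norm_num, log_mul (by norm_num) (by norm_num), log_pow,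
        Nat.cast_ofNat]
    have hmono : log 12 ≤ log (2 * x) := log_le_log (by norm_num) (by linarith)
    linarith [log_two_gt_d9, log_three_gt_d9]
  have hroot_add_inv : 2 * x ^ x⁻¹ + (x ^ x⁻¹)⁻¹ < 3.45 := by
    generalize x ^ x⁻¹ = v at hroot_one hroot_lt
    have hv : 0 < v := by linarith
    field_simp
    nlinarith
  linarith

lemma log_mul_rpow_lt_mul_log_log (hx : 6 ≤ x) :
    log (x * (2 * x) ^ x) < x * log (log (x * (2 * x) ^ x)) := by
  have hx0 : 0 < x := by linarith
  refine log_lt_mul_log_log_of_rpow_inv_lt_log (by positivity) hx0 ?_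
  calc
    (x * (2 * x) ^ x) ^ x⁻¹ = x * (2 * x ^ x⁻¹) := by
      rw [mul_rpow hx0.le (by positivity), rpow_rpow_inv (by positivity) hx0.ne']
      ring
    _ < x * (log (2 * x) + log x / x) := by gcongr; exact two_mul_rpow_inv_self_lt_log_add hx
    _ = log (x * (2 * x) ^ x) := by
      rw [log_mul hx0.ne' (by positivity), log_rpow (by positivity)]
      field_simp
      ring

end SixLe

lemma one_lt_log_four : 1 < log 4 := by
  rw [lt_log_iff_exp_lt (by norm_num)]
  linarith [exp_one_lt_d9]

lemma log_four_lt_mul_log_log_four {x : ℝ} (hx : 6 ≤ x) : log 4 < x * log (log 4) := by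
  have hlog : log 4 = 2 * log 2 := by
    rw [show (4 : ℝ) = 2 ^ 2 by norm_num, log_pow, Nat.cast_ofNat]
  refine lt_mul_log_of_add_sq_lt (by linarith) ?_
  nlinarith [log_two_gt_d9, log_two_lt_d9]

/-- Lemma 2.6: if `x > 6` and `4 < y ≤ x·(2x)^x`, then `log y / log (log y) < x`.
Here `log` is the natural logarithm and `(2x)^x` is the real power. -/
theorem log_div_log_log_lt (x y : ℝ) (hx : x > 6) (hy : 4 < y)
    (hxy : y ≤ x * (2 * x) ^ x) :
    Real.log y / Real.log (Real.log y) < x := by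
  have hlog4 : log 4 ≤ log y := log_le_log (by norm_num) hy.le
  have hlogb : log y ≤ log (x * (2 * x) ^ x) := log_le_log (by linarith) hxy
  have hlog_one : 1 < log y := one_lt_log_four.trans_le hlog4
  rw [div_lt_iff₀ (log_pos hlog_one)]
  have hpos : 0 < log 4 := by linarith [one_lt_log_four]
  have hends := (convex_setOf_lt_mul_log (c := x) (by linarith)).ordConnected.out
    ⟨hpos, log_four_lt_mul_log_log_four hx.le⟩
    ⟨by simp only [mem_Ioi]; linarith, log_mul_rpow_lt_mul_log_log hx.le⟩
  exact (hends ⟨hlog4, hlogb⟩).2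
end

section
/- For every real number x > 6 one has log(x) + x·log(2x) ≤ x·log(log(x) + x·log(2x)). -/
/-!
Put `u = log x / x` and `s = u + log (a * x)`, so that `log x + x * log (a * x) = x * s` and
`exp s = a * x * exp u`. The inequality `x * s ≤ x * log (x * s)` therefore amounts to
`a * exp u ≤ s`. For `a ≥ 1` the difference of the two sides is monotone in `x ≥ e`, because `u`
decreases there while `u - a * exp u` decreases in `u ≥ 0`. For `a = 2` it is thus enough to look
at `x = 6`.
-/

open Real Set

section

variable {a : ℝ}

lemma log_add_mul_log_mul_le_of_mul_exp_le {x : ℝ} (ha : 0 < a) (hx : 0 < x)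
    (h : a * exp (log x / x) ≤ log x / x + log (a * x)) :
    log x + x * log (a * x) ≤ x * log (log x + x * log (a * x)) := by
  have factor : log x + x * log (a * x) = x * (log x / x + log (a * x)) := by
    rw [mul_add, mul_div_cancel₀ _ hx.ne']
  have exp_le : exp (log x / x + log (a * x)) ≤ x * (log x / x + log (a * x)) :=
    calc exp (log x / x + log (a * x)) = x * (a * exp (log x / x)) := by
          rw [exp_add, exp_log (mul_pos ha hx)]
          ring
      _ ≤ x * (log x / x + log (a * x)) := by gcongr
  rw [factor]
  gcongr
  exact (le_log_iff_exp_le ((exp_pos _).trans_le exp_le)).2 exp_le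

lemma antitoneOn_sub_mul_exp (ha : 1 ≤ a) : AntitoneOn (fun u ↦ u - a * exp u) (Ici 0) := by
  intro u hu v _ huv
  have one_le : 1 ≤ a * exp u := one_le_mul_of_one_le_of_one_le ha (one_le_exp hu)
  have increment_le : v - u ≤ a * exp v - a * exp u :=
    calc v - u ≤ a * exp u * (v - u) := le_mul_of_one_le_left (sub_nonneg.2 huv) one_le
      _ ≤ a * exp u * (exp (v - u) - 1) :=
          mul_le_mul_of_nonneg_left (le_sub_iff_add_le.2 (add_one_le_exp _))
            (zero_le_one.trans one_le)
      _ = a * exp v - a * exp u := by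
          rw [mul_sub_one, mul_assoc, ← exp_add, add_sub_cancel]
  change v - a * exp v ≤ u - a * exp u
  linarith

lemma monotoneOn_log_div_self_add_log_mul_sub_mul_exp (ha : 1 ≤ a) :
    MonotoneOn (fun x ↦ log x / x + log (a * x) - a * exp (log x / x)) (Ici (exp 1)) := by
  intro x hx y hy hxy
  have log_div_self_nonneg {z : ℝ} (hz : z ∈ Ici (exp 1)) : 0 ≤ log z / z :=
    have one_le : 1 ≤ z := (one_le_exp zero_le_one).trans hz
    div_nonneg (log_nonneg one_le) (zero_le_one.trans one_le)
  have sub_le : log x / x - a * exp (log x / x) ≤ log y / y - a * exp (log y / y) :=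
    antitoneOn_sub_mul_exp ha (log_div_self_nonneg hy) (log_div_self_nonneg hx)
      (log_div_self_antitoneOn hx hy hxy)
  have log_le : log (a * x) ≤ log (a * y) := by
    have hx0 : 0 < x := (exp_pos 1).trans_le hx
    gcongr
  change log x / x + log (a * x) - a * exp (log x / x) ≤
    log y / y + log (a * y) - a * exp (log y / y)
  linarith

end

lemma exp_log_six_div_six_le : exp (log 6 / 6) ≤ 27 / 20 := by
  rw [← le_log_iff_exp_le (by norm_num), div_le_iff₀' (by norm_num)]
  calc log 6 ≤ log ((27 / 20) ^ 6) := log_le_log (by norm_num) (by norm_num)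
    _ = 6 * log (27 / 20) := by simp only [log_pow, Nat.cast_ofNat]

lemma two_mul_exp_log_six_div_six_le :
    2 * exp (log 6 / 6) ≤ log 6 / 6 + log (2 * 6) := by
  have log_six : log 6 = log 2 + log 3 := by
    rw [← log_mul (by norm_num) (by norm_num)]
    norm_num
  have log_twelve : log (2 * 6) = log 2 + log 6 := log_mul (by norm_num) (by norm_num)
  calc 2 * exp (log 6 / 6) ≤ 27 / 10 := by linarith [exp_log_six_div_six_le]
    _ ≤ log 6 / 6 + log (2 * 6) := by
      rw [log_twelve, log_six]
      linarith [log_two_gt_d9, log_three_gt_d9]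

/-- Key inequality in the proof of Lemma 2.6: for every `x > 6`,
`log x + x·log(2x) ≤ x·log(log x + x·log(2x))`. -/
theorem key_log_inequality (x : ℝ) (hx : x > 6) :
    Real.log x + x * Real.log (2 * x) ≤
      x * Real.log (Real.log x + x * Real.log (2 * x)) := by
  have exp_one_le_six : exp 1 ≤ 6 := by linarith [exp_one_lt_three]
  have monotone_bound : log 6 / 6 + log (2 * 6) - 2 * exp (log 6 / 6) ≤
      log x / x + log (2 * x) - 2 * exp (log x / x) :=
    monotoneOn_log_div_self_add_log_mul_sub_mul_exp one_le_two exp_one_le_six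
      (exp_one_le_six.trans hx.le) hx.le
  apply log_add_mul_log_mul_le_of_mul_exp_le two_pos (by linarith)
  linarith [two_mul_exp_log_six_div_six_le]
end
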